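/- Half-period product identity (formula (n6a)): Let τ lie in the complex upper half-plane and let u ∈ ℂ be such that θ₁(u,τ)·θ₄(u,τ) ≠ 0 and θ₁(u+1/2,τ)·θ₄(u+1/2,τ) ≠ 0. Then S'(u,τ)·S'(u + 1/2, τ) = −π² θ₄(0,τ)⁴. -/

import Mathlib

open Complex

/-- Jacobi theta function θ₁(u,τ). -/
noncomputable def theta1 (u τ : ℂ) : ℂ :=
  -∑' k : ℤ, Complex.exp ((Real.pi : ℂ) * Complex.I * τ * ((k : ℂ) + 1/2)^2
      + 2 * (Real.pi : ℂ) * Complex.I * (u + 1/2) * ((k : ℂ) + 1/2))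

/-- Jacobi theta function θ₂(u,τ). -/
noncomputable def theta2 (u τ : ℂ) : ℂ :=
  ∑' k : ℤ, Complex.exp ((Real.pi : ℂ) * Complex.I * τ * ((k : ℂ) + 1/2)^2
      + 2 * (Real.pi : ℂ) * Complex.I * u * ((k : ℂ) + 1/2))

/-- Jacobi theta function θ₃(u,τ). -/
noncomputable def theta3 (u τ : ℂ) : ℂ :=
  ∑' k : ℤ, Complex.exp ((Real.pi : ℂ) * Complex.I * τ * (k : ℂ)^2
      + 2 * (Real.pi : ℂ) * Complex.I * u * (k : ℂ))

/-- Jacobi theta function θ₄(u,τ). -/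
noncomputable def theta4 (u τ : ℂ) : ℂ :=
  ∑' k : ℤ, Complex.exp ((Real.pi : ℂ) * Complex.I * τ * (k : ℂ)^2
      + 2 * (Real.pi : ℂ) * Complex.I * (u + 1/2) * (k : ℂ))

/-- ζ_a(u,τ) = θ_a'(u,τ)/θ_a(u,τ). -/
noncomputable def zeta1 (u τ : ℂ) : ℂ := deriv (fun v => theta1 v τ) u / theta1 u τ
noncomputable def zeta2 (u τ : ℂ) : ℂ := deriv (fun v => theta2 v τ) u / theta2 u τ
noncomputable def zeta3 (u τ : ℂ) : ℂ := deriv (fun v => theta3 v τ) u / theta3 u τ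
noncomputable def zeta4 (u τ : ℂ) : ℂ := deriv (fun v => theta4 v τ) u / theta4 u τ

/-- ℘_a(u,τ) = −∂_u ζ_a(u,τ). -/
noncomputable def wp1 (u τ : ℂ) : ℂ := -deriv (fun v => zeta1 v τ) u
noncomputable def wp2 (u τ : ℂ) : ℂ := -deriv (fun v => zeta2 v τ) u
noncomputable def wp1' (u τ : ℂ) : ℂ := deriv (fun v => wp1 v τ) u
noncomputable def wp2' (u τ : ℂ) : ℂ := deriv (fun v => wp2 v τ) u

/-- S'(u,τ) = ζ₁(u,τ) − ζ₄(u,τ). -/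
noncomputable def Sp (u τ : ℂ) : ℂ := zeta1 u τ - zeta4 u τ
/-- S''(u,τ) = ∂_u S'(u,τ). -/
noncomputable def Spp (u τ : ℂ) : ℂ := deriv (fun v => Sp v τ) u
/-- S'''(u,τ) = ∂_u S''(u,τ). -/
noncomputable def Sppp (u τ : ℂ) : ℂ := deriv (fun v => Spp v τ) u

/-- Partial derivative in the j-th coordinate of a ℂ-valued function on ℝ^N. -/
noncomputable def pdC {N : ℕ} (j : Fin N) (f : (Fin N → ℝ) → ℂ) (x : Fin N → ℝ) : ℂ :=
  fderiv ℝ f x (Pi.single j 1)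

/-- Partial derivative in the j-th coordinate of an ℝ-valued function on ℝ^d. -/
noncomputable def pd {d : ℕ} (j : Fin d) (f : (Fin d → ℝ) → ℝ) (x : Fin d → ℝ) : ℝ :=
  fderiv ℝ f x (Pi.single j 1)

/-!
All four theta functions are translates of series `thetaChar` with a characteristic, and a product
of two such series is a sum over `ℤ × ℤ` which the substitution `(m, n) = (p + q, p - q)` splits
into products of series at `2τ`. Hence `θ₁(u + s) θ₄(u - s)` and `θ₂(u + s) θ₃(u - s)` are
combinations of the same two products, and eliminating these gives an addition formula whose
derivative at `s = 0` reads
`(θ₁' θ₄ - θ₁ θ₄')(u) θ₂(0) θ₃(0) = θ₁'(0) θ₄(0) θ₂(u) θ₃(u)`.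

The constant is given by Jacobi's formula `θ₁'(0) = π θ₂(0) θ₃(0) θ₄(0)`: by the duplication
formulas the ratio of the two sides does not change under `τ ↦ 2τ`, and it tends to `1` as
`im τ → ∞`. The same descent from `i∞` shows that `θ₂(0)`, `θ₃(0)`, `θ₄(0)` do not vanish.
Therefore `S' = π θ₄(0)² θ₂ θ₃ / (θ₁ θ₄)`, and up to sign a translation by `1/2` inverts the
quotient `θ₂ θ₃ / (θ₁ θ₄)`.
-/

open Filter Topology
open scoped Real

/-! ### Theta functions with a characteristic -/

/-- The `n`-th term of the series defining `thetaChar`. -/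
noncomputable def thetaCharTerm (n : ℤ) (a z τ : ℂ) : ℂ :=
  cexp (π * I * τ * (n + a) ^ 2 + 2 * π * I * z * (n + a))

/-- The theta function with characteristic `a`, of which all four Jacobi theta functions are
special cases. The usual second characteristic `b` is not recorded, being a translation of `z`. -/
noncomputable def thetaChar (a z τ : ℂ) : ℂ := ∑' n : ℤ, thetaCharTerm n a z τ

lemma thetaCharTerm_eq_cexp_mul (n : ℤ) (a z τ : ℂ) :
    thetaCharTerm n a z τ =
      cexp (π * I * τ * a ^ 2 + 2 * π * I * z * a) * jacobiTheta₂_term n (z + a * τ) τ := by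
  rw [thetaCharTerm, jacobiTheta₂_term, ← Complex.exp_add]
  ring_nf

lemma thetaChar_eq_cexp_mul (a z τ : ℂ) :
    thetaChar a z τ =
      cexp (π * I * τ * a ^ 2 + 2 * π * I * z * a) * jacobiTheta₂ (z + a * τ) τ := by
  simp only [thetaChar, thetaCharTerm_eq_cexp_mul, tsum_mul_left, jacobiTheta₂]

lemma summable_norm_thetaCharTerm (a z : ℂ) {τ : ℂ} (hτ : 0 < τ.im) :
    Summable fun n ↦ ‖thetaCharTerm n a z τ‖ := by
  simpa only [thetaCharTerm_eq_cexp_mul] using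
    (((summable_jacobiTheta₂_term_iff _ τ).2 hτ).mul_left _).norm

lemma hasDerivAt_thetaChar (a z : ℂ) {τ : ℂ} (hτ : 0 < τ.im) :
    HasDerivAt (thetaChar a · τ) (cexp (π * I * τ * a ^ 2 + 2 * π * I * z * a) *
      (2 * π * I * a * jacobiTheta₂ (z + a * τ) τ + jacobiTheta₂' (z + a * τ) τ)) z := by
  have hexp : HasDerivAt (fun z ↦ cexp (π * I * τ * a ^ 2 + 2 * π * I * z * a))
      (cexp (π * I * τ * a ^ 2 + 2 * π * I * z * a) * (2 * π * I * a)) z := by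
    simpa using ((((hasDerivAt_id z).const_mul (2 * π * I)).mul_const a).const_add
      (π * I * τ * a ^ 2)).cexp
  have hJ := (hasDerivAt_jacobiTheta₂_fst (z + a * τ) hτ).comp_add_const z (a * τ)
  simp only [thetaChar_eq_cexp_mul]
  exact (hexp.fun_mul hJ).congr_deriv (by ring)

lemma differentiable_thetaChar (a : ℂ) {τ : ℂ} (hτ : 0 < τ.im) :
    Differentiable ℂ (thetaChar a · τ) :=
  fun z ↦ (hasDerivAt_thetaChar a z hτ).differentiableAt

lemma thetaChar_add_one (a z τ : ℂ) : thetaChar (a + 1) z τ = thetaChar a z τ := by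
  rw [thetaChar, thetaChar, ← (Equiv.addRight (1 : ℤ)).tsum_eq (thetaCharTerm · a z τ)]
  refine tsum_congr fun n ↦ ?_
  rw [thetaCharTerm, thetaCharTerm, Equiv.coe_addRight, Int.cast_add, Int.cast_one, add_assoc,
    add_comm 1 a]

lemma thetaChar_neg_neg (a z τ : ℂ) : thetaChar (-a) (-z) τ = thetaChar a z τ := by
  rw [thetaChar, thetaChar, ← (Equiv.neg ℤ).tsum_eq]
  refine tsum_congr fun n ↦ ?_
  simp only [thetaCharTerm, Equiv.neg_apply, Int.cast_neg]
  ring_nf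

lemma thetaChar_add_period (a z τ : ℂ) :
    thetaChar a (z + 1) τ = cexp (2 * π * I * a) * thetaChar a z τ := by
  rw [thetaChar, thetaChar, ← tsum_mul_left]
  refine tsum_congr fun n ↦ ?_
  rw [thetaCharTerm, thetaCharTerm, ← Complex.exp_add, Complex.exp_eq_exp_iff_exists_int]
  exact ⟨n, by ring⟩

/-- The change of variables `(p, q) ↦ (p + q, p - q)` on `ℤ × ℤ`, which reaches the pairs of equal
parity, together with its translate reaching the pairs of opposite parity. -/
def sumDiffEquiv : (ℤ × ℤ) ⊕ (ℤ × ℤ) ≃ ℤ × ℤ where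
  toFun := Sum.elim (fun p ↦ (p.1 + p.2, p.1 - p.2)) (fun p ↦ (p.1 + p.2 + 1, p.1 - p.2))
  invFun p := if (p.1 + p.2) % 2 = 0 then Sum.inl ((p.1 + p.2) / 2, (p.1 - p.2) / 2)
    else Sum.inr ((p.1 + p.2 - 1) / 2, (p.1 - p.2 - 1) / 2)
  left_inv := by rintro (⟨p, q⟩ | ⟨p, q⟩) <;> grind
  right_inv := by rintro ⟨m, n⟩; grind

lemma hasSum_thetaCharTerm_mul (a b z w : ℂ) {τ : ℂ} (hτ : 0 < τ.im) :
    HasSum (fun p : ℤ × ℤ ↦ thetaCharTerm p.1 a z τ * thetaCharTerm p.2 b w τ)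
      (thetaChar a z τ * thetaChar b w τ) := by
  have hz := summable_norm_thetaCharTerm a z hτ
  have hw := summable_norm_thetaCharTerm b w hτ
  rw [thetaChar, thetaChar, tsum_mul_tsum_of_summable_norm hz hw]
  exact (summable_mul_of_summable_norm hz hw).hasSum

theorem thetaChar_add_mul_thetaChar_sub (a b x y : ℂ) {τ : ℂ} (hτ : 0 < τ.im) :
    thetaChar a (x + y) τ * thetaChar b (x - y) τ =
      thetaChar ((a + b) / 2) (2 * x) (2 * τ) * thetaChar ((a - b) / 2) (2 * y) (2 * τ) +
      thetaChar ((a + b + 1) / 2) (2 * x) (2 * τ) *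
        thetaChar ((a - b + 1) / 2) (2 * y) (2 * τ) := by
  have h2τ : 0 < (2 * τ).im := by simpa using hτ
  have hsum := hasSum_thetaCharTerm_mul a b (x + y) (x - y) hτ
  rw [← sumDiffEquiv.hasSum_iff] at hsum
  refine hsum.unique (HasSum.sum ?_ ?_)
  · convert hasSum_thetaCharTerm_mul _ _ (2 * x) (2 * y) h2τ using 2 with p
    simp only [Function.comp_apply, sumDiffEquiv, Equiv.coe_fn_mk, Sum.elim_inl, thetaCharTerm,
      ← Complex.exp_add]
    push_cast
    ring_nf
  · convert hasSum_thetaCharTerm_mul _ _ (2 * x) (2 * y) h2τ using 2 with p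
    simp only [Function.comp_apply, sumDiffEquiv, Equiv.coe_fn_mk, Sum.elim_inr, thetaCharTerm,
      ← Complex.exp_add]
    push_cast
    ring_nf

/-! ### The four Jacobi theta functions -/

lemma theta1_eq_neg_thetaChar (u τ : ℂ) : theta1 u τ = -thetaChar (1 / 2) (u + 1 / 2) τ := rfl

lemma theta2_eq_thetaChar (u τ : ℂ) : theta2 u τ = thetaChar (1 / 2) u τ := rfl

lemma theta3_eq_thetaChar (u τ : ℂ) : theta3 u τ = thetaChar 0 u τ := by
  simp only [theta3, thetaChar, thetaCharTerm, add_zero]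

lemma theta4_eq_thetaChar (u τ : ℂ) : theta4 u τ = thetaChar 0 (u + 1 / 2) τ := by
  simp only [theta4, thetaChar, thetaCharTerm, add_zero]

lemma thetaChar_half_add_period (z τ : ℂ) :
    thetaChar (1 / 2) (z + 1) τ = -thetaChar (1 / 2) z τ := by
  rw [thetaChar_add_period, show 2 * π * I * (1 / 2) = π * I by ring, Complex.exp_pi_mul_I]
  ring

lemma theta1_add_half (u τ : ℂ) : theta1 (u + 1 / 2) τ = theta2 u τ := by
  rw [theta1_eq_neg_thetaChar, add_assoc, add_halves, thetaChar_half_add_period, neg_neg,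
    theta2_eq_thetaChar]

lemma theta2_add_half (u τ : ℂ) : theta2 (u + 1 / 2) τ = -theta1 u τ := by
  rw [theta2_eq_thetaChar, theta1_eq_neg_thetaChar, neg_neg]

lemma theta3_add_half (u τ : ℂ) : theta3 (u + 1 / 2) τ = theta4 u τ := by
  rw [theta3_eq_thetaChar, theta4_eq_thetaChar]

lemma theta4_add_half (u τ : ℂ) : theta4 (u + 1 / 2) τ = theta3 u τ := by
  rw [theta4_eq_thetaChar, add_assoc, add_halves, thetaChar_add_period, mul_zero, Complex.exp_zero,
    one_mul, theta3_eq_thetaChar]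

lemma theta2_neg (u τ : ℂ) : theta2 (-u) τ = theta2 u τ := by
  rw [theta2_eq_thetaChar, theta2_eq_thetaChar, ← thetaChar_neg_neg (1 / 2) u,
    ← thetaChar_add_one (-(1 / 2))]
  norm_num

lemma theta3_neg (u τ : ℂ) : theta3 (-u) τ = theta3 u τ := by
  rw [theta3_eq_thetaChar, theta3_eq_thetaChar, ← thetaChar_neg_neg 0 u, neg_zero]

lemma theta1_zero (τ : ℂ) : theta1 0 τ = 0 := by
  have hneg : theta1 0 τ = -theta1 0 τ := calc
    theta1 0 τ = theta2 (-(1 / 2)) τ := by rw [← theta1_add_half, neg_add_cancel]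
    _ = theta2 (0 + 1 / 2) τ := by rw [theta2_neg, zero_add]
    _ = -theta1 0 τ := theta2_add_half 0 τ
  exact self_eq_neg.1 hneg

lemma differentiable_theta1 {τ : ℂ} (hτ : 0 < τ.im) : Differentiable ℂ (theta1 · τ) := fun u ↦
  ((differentiable_thetaChar (1 / 2) hτ).comp (differentiable_id.add_const (1 / 2))).neg u

lemma differentiable_theta2 {τ : ℂ} (hτ : 0 < τ.im) : Differentiable ℂ (theta2 · τ) :=
  differentiable_thetaChar (1 / 2) hτ

lemma differentiable_theta3 {τ : ℂ} (hτ : 0 < τ.im) : Differentiable ℂ (theta3 · τ) := by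
  simpa only [theta3_eq_thetaChar] using differentiable_thetaChar 0 hτ

lemma differentiable_theta4 {τ : ℂ} (hτ : 0 < τ.im) : Differentiable ℂ (theta4 · τ) := by
  simp only [theta4_eq_thetaChar]
  exact (differentiable_thetaChar 0 hτ).comp (differentiable_id.add_const (1 / 2))

/-! ### Duplication formulas -/

lemma theta1_mul_theta2 (u : ℂ) {τ : ℂ} (hτ : 0 < τ.im) :
    theta1 u τ * theta2 u τ = theta1 (2 * u) (2 * τ) * theta4 0 (2 * τ) := by
  have hprod : theta2 (u + 1 / 2) τ * theta2 u τ =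
      theta2 (2 * u + 1 / 2) (2 * τ) * theta4 0 (2 * τ) +
        thetaChar 1 (2 * u + 1 / 2) (2 * τ) * theta2 (0 + 1 / 2) (2 * τ) := by
    simp only [theta2_eq_thetaChar, theta4_eq_thetaChar]
    convert thetaChar_add_mul_thetaChar_sub (1 / 2) (1 / 2) (u + 1 / 4) (1 / 4) hτ using 1 <;>
      ring_nf
  simp only [theta2_add_half, theta1_zero] at hprod
  linear_combination -hprod

lemma theta2_zero_sq {τ : ℂ} (hτ : 0 < τ.im) :
    theta2 0 τ ^ 2 = 2 * theta2 0 (2 * τ) * theta3 0 (2 * τ) := by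
  have hprod : theta2 0 τ * theta2 0 τ =
      theta2 0 (2 * τ) * theta3 0 (2 * τ) + thetaChar (0 + 1) 0 (2 * τ) * theta2 0 (2 * τ) := by
    simp only [theta2_eq_thetaChar, theta3_eq_thetaChar]
    convert thetaChar_add_mul_thetaChar_sub (1 / 2) (1 / 2) 0 0 hτ using 1 <;> ring_nf
  rw [thetaChar_add_one, ← theta3_eq_thetaChar] at hprod
  linear_combination hprod

lemma theta3_zero_mul_theta4_zero {τ : ℂ} (hτ : 0 < τ.im) :
    theta3 0 τ * theta4 0 τ = theta4 0 (2 * τ) ^ 2 := by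
  have hprod : theta4 0 τ * theta3 0 τ =
      theta4 0 (2 * τ) * theta4 0 (2 * τ) + theta2 (0 + 1 / 2) (2 * τ) *
        theta2 (0 + 1 / 2) (2 * τ) := by
    simp only [theta2_eq_thetaChar, theta3_eq_thetaChar, theta4_eq_thetaChar]
    convert thetaChar_add_mul_thetaChar_sub 0 0 (1 / 4) (1 / 4) hτ using 1 <;> ring_nf
  rw [theta2_add_half, theta1_zero] at hprod
  linear_combination hprod

/-! ### The addition formula -/

lemma theta2_add_mul_theta3_sub (u s : ℂ) {τ : ℂ} (hτ : 0 < τ.im) :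
    theta2 (u + s) τ * theta3 (u - s) τ =
      thetaChar (1 / 4) (2 * u) (2 * τ) * thetaChar (1 / 4) (2 * s) (2 * τ) +
      thetaChar (3 / 4) (2 * u) (2 * τ) * thetaChar (3 / 4) (2 * s) (2 * τ) := by
  rw [theta2_eq_thetaChar, theta3_eq_thetaChar,
    thetaChar_add_mul_thetaChar_sub (1 / 2) 0 u s hτ]
  norm_num

lemma theta1_add_mul_theta4_sub (u s : ℂ) {τ : ℂ} (hτ : 0 < τ.im) :
    theta1 (u + s) τ * theta4 (u - s) τ =
      -I * (thetaChar (1 / 4) (2 * u) (2 * τ) * thetaChar (1 / 4) (2 * s) (2 * τ) -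
        thetaChar (3 / 4) (2 * u) (2 * τ) * thetaChar (3 / 4) (2 * s) (2 * τ)) := by
  have hquarter : cexp (2 * π * I * (1 / 4)) = I := by
    rw [show 2 * π * I * (1 / 4) = π / 2 * I by ring, Complex.exp_pi_div_two_mul_I]
  have hthree : cexp (2 * π * I * (3 / 4)) = -I := by
    rw [show 2 * π * I * (3 / 4) = π * I + π / 2 * I by ring, Complex.exp_add,
      Complex.exp_pi_mul_I, Complex.exp_pi_div_two_mul_I, neg_one_mul]
  have hprod := theta2_add_mul_theta3_sub (u + 1 / 2) s hτ
  rw [add_right_comm, add_sub_right_comm, theta2_add_half, theta3_add_half,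
    show 2 * (u + 1 / 2) = 2 * u + 1 by ring, thetaChar_add_period, thetaChar_add_period,
    hquarter, hthree] at hprod
  linear_combination -hprod

theorem theta1_add_mul_theta4_sub_mul_theta_zero (u s : ℂ) {τ : ℂ} (hτ : 0 < τ.im) :
    theta1 (u + s) τ * theta4 (u - s) τ * (theta2 0 τ * theta3 0 τ) =
      theta1 u τ * theta4 u τ * (theta2 s τ * theta3 s τ) +
      theta2 u τ * theta3 u τ * (theta1 s τ * theta4 s τ) := by
  have hsymm : thetaChar (3 / 4) 0 (2 * τ) = thetaChar (1 / 4) 0 (2 * τ) := by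
    rw [← thetaChar_neg_neg (1 / 4), ← thetaChar_add_one (-(1 / 4))]
    norm_num
  have h14 (z : ℂ) := theta1_add_mul_theta4_sub z 0 hτ
  have h23 (z : ℂ) := theta2_add_mul_theta3_sub z 0 hτ
  simp only [add_zero, sub_zero, mul_zero, hsymm] at h14 h23
  rw [theta1_add_mul_theta4_sub u s hτ, h14, h14, h23, h23, h23, mul_zero, hsymm]
  ring

lemma deriv_zero_eq_zero_of_even {𝕜 F : Type*} [NontriviallyNormedField 𝕜]
    [NormedAddCommGroup F] [IsAddTorsionFree F] [NormedSpace 𝕜 F] {f : 𝕜 → F} (hf : f.Even) :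
    deriv f 0 = 0 := by
  have hneg := deriv_comp_neg f 0
  rw [funext hf, neg_zero] at hneg
  exact self_eq_neg.1 hneg

lemma wronskian_theta1_theta4_mul_theta_zero (u : ℂ) {τ : ℂ} (hτ : 0 < τ.im) :
    (deriv (theta1 · τ) u * theta4 u τ - theta1 u τ * deriv (theta4 · τ) u) *
        (theta2 0 τ * theta3 0 τ) =
      theta2 u τ * theta3 u τ * (deriv (theta1 · τ) 0 * theta4 0 τ) := by
  have hd1 := differentiable_theta1 hτ
  have hd4 := differentiable_theta4 hτ
  have heven : deriv (fun s ↦ theta2 s τ * theta3 s τ) 0 = 0 :=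
    deriv_zero_eq_zero_of_even fun s ↦ by rw [theta2_neg, theta3_neg]
  have h23 := ((differentiable_theta2 hτ 0).fun_mul
    (differentiable_theta3 hτ 0)).hasDerivAt.congr_deriv heven
  have h14 := (hd1 0).hasDerivAt.mul (hd4 0).hasDerivAt
  have hadd := (hd1 (u + 0)).hasDerivAt.comp_const_add u 0
  have hsub := (hd4 (u - 0)).hasDerivAt.comp_const_sub u 0
  have hleft := (hadd.mul hsub).mul_const (theta2 0 τ * theta3 0 τ)
  have hright := (h23.const_mul (theta1 u τ * theta4 u τ)).add
    (h14.const_mul (theta2 u τ * theta3 u τ))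
  have huniq := hleft.unique (hright.congr_of_eventuallyEq
    (.of_forall fun s ↦ theta1_add_mul_theta4_sub_mul_theta_zero u s hτ))
  simp only [add_zero, sub_zero, theta1_zero] at huniq
  linear_combination huniq

/-! ### Behaviour as `im τ → ∞` -/

lemma tendsto_tsum_mul_cexp_comap_im_atTop {ι : Type*} {c : ι → ℂ} {e : ι → ℝ}
    (he : ∀ k, 0 ≤ e k) (hc : Summable fun k ↦ c k * cexp (π * I * I * e k)) :
    Tendsto (fun τ : ℂ ↦ ∑' k, c k * cexp (π * I * τ * e k)) (comap im atTop)
      (𝓝 (∑' k, if e k = 0 then c k else 0)) := by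
  have hnorm (τ : ℂ) (k : ι) : ‖cexp (π * I * τ * e k)‖ = Real.exp (-π * e k * τ.im) := by
    rw [Complex.norm_exp, show π * I * τ * e k = ((π * e k : ℝ) : ℂ) * (I * τ) by push_cast; ring,
      Complex.re_ofReal_mul, Complex.I_mul_re]
    ring_nf
  refine tendsto_tsum_of_dominated_convergence hc.norm (fun k ↦ ?_) ?_
  · split_ifs with hk
    · simpa [hk] using tendsto_const_nhds
    · have hpos : 0 < π * e k := mul_pos Real.pi_pos ((he k).lt_of_ne' hk)
      rw [← mul_zero (c k)]
      refine Tendsto.const_mul _ (tendsto_zero_iff_norm_tendsto_zero.2 ?_)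
      simp only [hnorm]
      exact Real.tendsto_exp_atBot.comp
        (tendsto_comap.const_mul_atTop_of_neg (by linarith))
  · filter_upwards [tendsto_comap.eventually_ge_atTop (1 : ℝ)] with τ hτ k
    have hdecay : -π * e k * τ.im ≤ -π * e k * I.im := by
      rw [Complex.I_im]
      nlinarith [mul_nonneg Real.pi_nonneg (he k)]
    rw [norm_mul, norm_mul, hnorm, hnorm]
    gcongr

lemma tendsto_tsum_mul_cexp_sq_add_self {c : ℤ → ℂ}
    (hc : Summable fun k : ℤ ↦ c k * cexp (π * I * I * (k ^ 2 + k))) :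
    Tendsto (fun τ : ℂ ↦ ∑' k : ℤ, c k * cexp (π * I * τ * (k ^ 2 + k))) (comap im atTop)
      (𝓝 (c 0 + c (-1))) := by
  have hfactor (k : ℤ) : (k : ℝ) ^ 2 + k = ((k * (k + 1) : ℤ) : ℝ) := by push_cast; ring
  have hzero (k : ℤ) : (k : ℝ) ^ 2 + k = 0 ↔ k ∈ ({0, -1} : Finset ℤ) := by
    rw [hfactor, Int.cast_eq_zero, mul_eq_zero, add_eq_zero_iff_eq_neg]
    simp
  have hnonneg (k : ℤ) : 0 ≤ (k : ℝ) ^ 2 + k := by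
    rw [hfactor, Int.cast_nonneg_iff]
    rcases le_or_gt 0 k with hk | hk <;> nlinarith
  have hlim := tendsto_tsum_mul_cexp_comap_im_atTop (c := c) hnonneg (mod_cast hc)
  have hvalue : (∑' k : ℤ, if (k : ℝ) ^ 2 + k = 0 then c k else 0) = c 0 + c (-1) := by
    rw [tsum_eq_sum (s := {0, -1}) fun k hk ↦ if_neg (mt (hzero k).1 hk),
      Finset.sum_congr rfl fun k hk ↦ if_pos ((hzero k).2 hk), Finset.sum_pair (by norm_num)]
  rw [hvalue] at hlim
  exact mod_cast hlim

lemma tendsto_jacobiTheta₂_add_half_period (a : ℂ) :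
    Tendsto (fun τ ↦ jacobiTheta₂ (a + τ / 2) τ) (comap im atTop)
      (𝓝 (1 + cexp (-(2 * π * I * a)))) := by
  have hterm (τ : ℂ) (k : ℤ) : jacobiTheta₂_term k (a + τ / 2) τ =
      cexp (2 * π * I * k * a) * cexp (π * I * τ * (k ^ 2 + k)) := by
    rw [jacobiTheta₂_term, ← Complex.exp_add]
    ring_nf
  have hsum := (summable_jacobiTheta₂_term_iff (a + I / 2) I).2 (by simp)
  simp only [hterm] at hsum
  simpa [jacobiTheta₂, hterm] using tendsto_tsum_mul_cexp_sq_add_self hsum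

lemma tendsto_jacobiTheta₂'_add_half_period (a : ℂ) :
    Tendsto (fun τ ↦ jacobiTheta₂' (a + τ / 2) τ) (comap im atTop)
      (𝓝 (-(2 * π * I) * cexp (-(2 * π * I * a)))) := by
  have hterm (τ : ℂ) (k : ℤ) : jacobiTheta₂'_term k (a + τ / 2) τ =
      2 * π * I * k * cexp (2 * π * I * k * a) * cexp (π * I * τ * (k ^ 2 + k)) := by
    rw [jacobiTheta₂'_term, jacobiTheta₂_term, mul_assoc (2 * π * I * k), ← Complex.exp_add]
    ring_nf
  have hsum := (summable_jacobiTheta₂'_term_iff (a + I / 2) I).2 (by simp)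
  simp only [hterm] at hsum
  simpa [jacobiTheta₂', hterm] using tendsto_tsum_mul_cexp_sq_add_self hsum

lemma tendsto_jacobiTheta₂_comap_im_atTop (z : ℂ) :
    Tendsto (jacobiTheta₂ z) (comap im atTop) (𝓝 1) := by
  have hterm (τ : ℂ) (k : ℤ) : jacobiTheta₂_term k z τ =
      cexp (2 * π * I * k * z) * cexp (π * I * τ * ((k : ℝ) ^ 2 : ℝ)) := by
    rw [jacobiTheta₂_term, ← Complex.exp_add]
    push_cast
    ring_nf
  have hsum := (summable_jacobiTheta₂_term_iff z I).2 (by simp)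
  simp only [hterm] at hsum
  have hlim := tendsto_tsum_mul_cexp_comap_im_atTop (fun k : ℤ ↦ sq_nonneg (k : ℝ)) hsum
  simp only [← hterm, sq_eq_zero_iff, Int.cast_eq_zero, tsum_ite_eq, Int.cast_zero, mul_zero,
    zero_mul, Complex.exp_zero] at hlim
  exact hlim

lemma tendsto_theta3_zero : Tendsto (theta3 0) (comap im atTop) (𝓝 1) := by
  have heq : theta3 0 = jacobiTheta₂ 0 := by
    ext τ
    simp [theta3_eq_thetaChar, thetaChar_eq_cexp_mul]
  exact heq ▸ tendsto_jacobiTheta₂_comap_im_atTop 0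

lemma tendsto_theta4_zero : Tendsto (theta4 0) (comap im atTop) (𝓝 1) := by
  have heq : theta4 0 = jacobiTheta₂ (1 / 2) := by
    ext τ
    simp [theta4_eq_thetaChar, thetaChar_eq_cexp_mul]
  exact heq ▸ tendsto_jacobiTheta₂_comap_im_atTop (1 / 2)

lemma theta2_zero_eq_cexp_mul (τ : ℂ) :
    theta2 0 τ = cexp (π * I * τ / 4) * jacobiTheta₂ (0 + τ / 2) τ := by
  rw [theta2_eq_thetaChar, thetaChar_eq_cexp_mul]
  ring_nf

lemma deriv_theta1_zero_eq_cexp_mul {τ : ℂ} (hτ : 0 < τ.im) :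
    deriv (theta1 · τ) 0 = cexp (π * I * τ / 4) * (-I * jacobiTheta₂' (1 / 2 + τ / 2) τ) := by
  have hJ : jacobiTheta₂ (1 / 2 + 1 / 2 * τ) τ = 0 := by
    have hzero := theta1_zero τ
    rw [theta1_eq_neg_thetaChar, zero_add, thetaChar_eq_cexp_mul, neg_eq_zero] at hzero
    exact (mul_eq_zero.1 hzero).resolve_left (Complex.exp_ne_zero _)
  have hderiv := ((hasDerivAt_thetaChar (1 / 2) (0 + 1 / 2) hτ).comp_add_const 0 (1 / 2)).neg
  have hexp : cexp (π * I * τ * (1 / 2) ^ 2 + 2 * π * I * (1 / 2) * (1 / 2)) =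
      cexp (π * I * τ / 4) * I := by
    nth_rw 4 [← Complex.exp_pi_div_two_mul_I]
    rw [← Complex.exp_add]
    ring_nf
  rw [zero_add, hJ, hexp] at hderiv
  refine hderiv.deriv.trans ?_
  ring_nf

lemma tendsto_two_pow_mul_comap_im_atTop {τ : ℂ} (hτ : 0 < τ.im) :
    Tendsto (fun n : ℕ ↦ 2 ^ n * τ) atTop (comap im atTop) := by
  have him (n : ℕ) : (2 ^ n * τ).im = 2 ^ n * τ.im := by
    exact_mod_cast Complex.im_ofReal_mul (2 ^ n) τ
  simp only [tendsto_comap_iff, Function.comp_def, him]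
  exact (tendsto_pow_atTop_atTop_of_one_lt one_lt_two).atTop_mul_const hτ

lemma of_eventually_comap_im_atTop_of_two_mul {P : ℂ → Prop}
    (hP : ∀ᶠ τ in comap im atTop, P τ) (hdesc : ∀ τ : ℂ, 0 < τ.im → P (2 * τ) → P τ)
    {τ : ℂ} (hτ : 0 < τ.im) : P τ := by
  obtain ⟨n, hn⟩ := ((tendsto_two_pow_mul_comap_im_atTop hτ).eventually hP).exists
  induction n generalizing τ with
  | zero => simpa using hn
  | succ n ih =>
    refine hdesc τ hτ (ih (by simpa using hτ) ?_)
    rwa [← mul_assoc, ← pow_succ]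

lemma eq_of_tendsto_comap_im_atTop_of_two_mul {X : Type*} [TopologicalSpace X] [T1Space X]
    {f : ℂ → X} {x : X} (hf : Tendsto f (comap im atTop) (𝓝 x))
    (hdouble : ∀ τ : ℂ, 0 < τ.im → f (2 * τ) = f τ) {τ : ℂ} (hτ : 0 < τ.im) : f τ = x := by
  by_contra hne
  exact of_eventually_comap_im_atTop_of_two_mul (P := fun σ ↦ f σ ≠ f τ)
    (hf.eventually_ne (Ne.symm hne)) (fun σ hσ h ↦ hdouble σ hσ ▸ h) hτ rfl

/-! ### Jacobi's derivative formula -/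

lemma theta4_zero_ne_zero {τ : ℂ} (hτ : 0 < τ.im) : theta4 0 τ ≠ 0 := by
  refine of_eventually_comap_im_atTop_of_two_mul (P := fun σ ↦ theta4 0 σ ≠ 0)
    (tendsto_theta4_zero.eventually_ne one_ne_zero) (fun σ hσ h ↦ ?_) hτ
  exact right_ne_zero_of_mul (theta3_zero_mul_theta4_zero hσ ▸ pow_ne_zero 2 h)

lemma theta3_zero_ne_zero {τ : ℂ} (hτ : 0 < τ.im) : theta3 0 τ ≠ 0 := by
  have h4 : theta4 0 (2 * τ) ≠ 0 := theta4_zero_ne_zero (by simpa using hτ)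
  exact left_ne_zero_of_mul (theta3_zero_mul_theta4_zero hτ ▸ pow_ne_zero 2 h4)

lemma theta2_zero_ne_zero {τ : ℂ} (hτ : 0 < τ.im) : theta2 0 τ ≠ 0 := by
  refine of_eventually_comap_im_atTop_of_two_mul (P := fun σ ↦ theta2 0 σ ≠ 0) ?_
    (fun σ hσ h ↦ ?_) hτ
  · filter_upwards [(tendsto_jacobiTheta₂_add_half_period 0).eventually_ne
      (b₂ := 0) (by norm_num)] with σ hσ
    rw [theta2_zero_eq_cexp_mul]
    exact mul_ne_zero (Complex.exp_ne_zero _) hσ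
  · have h3 : theta3 0 (2 * σ) ≠ 0 := theta3_zero_ne_zero (by simpa using hσ)
    rw [← pow_ne_zero_iff two_ne_zero, theta2_zero_sq hσ]
    exact mul_ne_zero (mul_ne_zero two_ne_zero h) h3

lemma deriv_theta1_zero_mul_theta2_zero {τ : ℂ} (hτ : 0 < τ.im) :
    deriv (theta1 · τ) 0 * theta2 0 τ =
      2 * deriv (theta1 · (2 * τ)) 0 * theta4 0 (2 * τ) := by
  have hleft := (differentiable_theta1 hτ 0).hasDerivAt.mul (differentiable_theta2 hτ 0).hasDerivAt
  have hright : deriv (fun u ↦ theta1 (2 * u) (2 * τ) * theta4 0 (2 * τ)) 0 =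
      2 * deriv (theta1 · (2 * τ)) 0 * theta4 0 (2 * τ) := by
    rw [deriv_mul_const_field, deriv_comp_mul_left 2 (theta1 · (2 * τ)), mul_zero, smul_eq_mul]
  rw [← hright, ← funext (theta1_mul_theta2 · hτ)]
  refine .trans ?_ hleft.deriv.symm
  rw [theta1_zero, zero_mul, add_zero]

lemma tendsto_deriv_theta1_zero_div :
    Tendsto (fun τ ↦ deriv (theta1 · τ) 0 / (theta2 0 τ * theta3 0 τ * theta4 0 τ))
      (comap im atTop) (𝓝 π) := by
  have hnum := (tendsto_jacobiTheta₂'_add_half_period (1 / 2)).const_mul (-I)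
  have hden := ((tendsto_jacobiTheta₂_add_half_period 0).mul tendsto_theta3_zero).mul
    tendsto_theta4_zero
  have hvalue : -I * (-(2 * π * I) * cexp (-(2 * π * I * (1 / 2)))) /
      ((1 + cexp (-(2 * π * I * 0))) * 1 * 1) = π := by
    rw [show -(2 * π * I * (1 / 2)) = -(π * I) by ring, Complex.exp_neg, Complex.exp_pi_mul_I,
      mul_zero, neg_zero, Complex.exp_zero]
    linear_combination -π * Complex.I_mul_I
  refine hvalue ▸ (hnum.div hden (by norm_num)).congr' ?_
  filter_upwards [tendsto_comap.eventually_gt_atTop (0 : ℝ)] with τ hτ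
  rw [Pi.div_apply, deriv_theta1_zero_eq_cexp_mul hτ, theta2_zero_eq_cexp_mul, mul_assoc (cexp _),
    mul_assoc (cexp _), mul_div_mul_left _ _ (Complex.exp_ne_zero _)]

theorem deriv_theta1_zero {τ : ℂ} (hτ : 0 < τ.im) :
    deriv (theta1 · τ) 0 = π * (theta2 0 τ * theta3 0 τ * theta4 0 τ) := by
  have hne {σ : ℂ} (hσ : 0 < σ.im) : theta2 0 σ * theta3 0 σ * theta4 0 σ ≠ 0 :=
    mul_ne_zero (mul_ne_zero (theta2_zero_ne_zero hσ) (theta3_zero_ne_zero hσ))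
      (theta4_zero_ne_zero hσ)
  rw [← div_eq_iff (hne hτ)]
  refine eq_of_tendsto_comap_im_atTop_of_two_mul tendsto_deriv_theta1_zero_div (fun σ hσ ↦ ?_) hτ
  have h2σ : 0 < (2 * σ).im := by simpa using hσ
  rw [div_eq_div_iff (hne h2σ) (hne hσ)]
  refine mul_right_cancel₀ (theta2_zero_ne_zero hσ) ?_
  linear_combination
    deriv (theta1 · (2 * σ)) 0 * (theta3 0 σ * theta4 0 σ) * theta2_zero_sq hσ +
    2 * deriv (theta1 · (2 * σ)) 0 * theta2 0 (2 * σ) * theta3 0 (2 * σ) *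
      theta3_zero_mul_theta4_zero hσ -
    theta2 0 (2 * σ) * theta3 0 (2 * σ) * theta4 0 (2 * σ) *
      deriv_theta1_zero_mul_theta2_zero hσ

theorem wronskian_theta1_theta4 (u : ℂ) {τ : ℂ} (hτ : 0 < τ.im) :
    deriv (theta1 · τ) u * theta4 u τ - theta1 u τ * deriv (theta4 · τ) u =
      π * theta4 0 τ ^ 2 * (theta2 u τ * theta3 u τ) := by
  refine mul_right_cancel₀ (mul_ne_zero (theta2_zero_ne_zero hτ) (theta3_zero_ne_zero hτ)) ?_
  rw [wronskian_theta1_theta4_mul_theta_zero u hτ, deriv_theta1_zero hτ]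
  ring

lemma Sp_eq_div {u τ : ℂ} (hτ : 0 < τ.im) (h1 : theta1 u τ ≠ 0) (h4 : theta4 u τ ≠ 0) :
    Sp u τ = π * theta4 0 τ ^ 2 * (theta2 u τ * theta3 u τ) / (theta1 u τ * theta4 u τ) := by
  rw [Sp, zeta1, zeta4, div_sub_div _ _ h1 h4, wronskian_theta1_theta4 u hτ]

/-- Half-period product identity (formula (n6a)): S'(u,τ)·S'(u+1/2,τ) = −π²θ₄(0,τ)⁴. -/
theorem Sp_half_period_product (τ u : ℂ) (hτ : 0 < τ.im)
    (h1 : theta1 u τ * theta4 u τ ≠ 0)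
    (h2 : theta1 (u + 1 / 2) τ * theta4 (u + 1 / 2) τ ≠ 0) :
    Sp u τ * Sp (u + 1 / 2) τ = -(Real.pi : ℂ) ^ 2 * theta4 0 τ ^ 4 := by
  obtain ⟨hu1, hu4⟩ := mul_ne_zero_iff.1 h1
  obtain ⟨hv1, hv4⟩ := mul_ne_zero_iff.1 h2
  rw [Sp_eq_div hτ hu1 hu4, Sp_eq_div hτ hv1 hv4]
  rw [theta1_add_half] at hv1 ⊢
  rw [theta4_add_half] at hv4 ⊢
  rw [theta2_add_half, theta3_add_half]
  field_simp
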